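/- arXiv:1104.4971 — 5 statements merged into one kernel-verified Lean document; each statement's English description precedes it below -/
import Mathlib

section
/- Let n = V* ⊕ V be the modified cotangent Lie algebra associated to ρ. Then the canonical neutral symmetric bilinear form Q on V* ⊕ V, defined by Q((ξ,u),(η,v)) = ξ(v) + η(u), is nondegenerate and ad-invariant: Q([x,y],z) + Q(y,[x,z]) = 0 for all x,y,z ∈ n. -/
open scoped RealInnerProductSpace

variable (V : Type*) [NormedAddCommGroup V] [InnerProductSpace ℝ V]

/-- The functional `φ(u,v) ∈ V*` given by `φ(u,v)(w) = ⟨ρ(w)u, v⟩₊`. -/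
noncomputable def mcPhi (ρ : V →ₗ[ℝ] V →ₗ[ℝ] V) (u v : V) : Module.Dual ℝ V where
  toFun w := ⟪ρ w u, v⟫
  map_add' w w' := by simp [map_add, LinearMap.add_apply, inner_add_left]
  map_smul' a w := by simp [map_smul, LinearMap.smul_apply, inner_smul_left]

/-- The modified cotangent bracket on `V* ⊕ V`: `[(ξ,u),(η,v)] = (φ(u,v), 0)`. -/
noncomputable def mcBracket (ρ : V →ₗ[ℝ] V →ₗ[ℝ] V) :
    Module.Dual ℝ V × V → Module.Dual ℝ V × V → Module.Dual ℝ V × V :=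
  fun x y => (mcPhi V ρ x.2 y.2, 0)

/-- The canonical neutral symmetric bilinear form `Q((ξ,u),(η,v)) = ξ(v) + η(u)`
on `V* ⊕ V`. -/
def mcQ : Module.Dual ℝ V × V → Module.Dual ℝ V × V → ℝ :=
  fun x y => x.1 y.2 + y.1 x.2

/-! The bracket takes values in `V*` and depends only on the `V`-components, so ad-invariance says
that `(w, u, v) ↦ ⟪ρ w u, v⟫` changes sign when `w` and `v` are swapped. It does: it changes sign
under `w ↔ u` because `ρ` is alternating and under `u ↔ v` because `ρ w` is skew-adjoint, and the
transposition `w ↔ v` is a product of three of these. Nondegeneracy amounts to linear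
functionals separating the vectors of `V`. -/

theorem bilinForm_swap_of_isSkewAdjoint_of_isAlt {R M : Type*} [CommRing R] [AddCommGroup M]
    [Module R M] {B : LinearMap.BilinForm R M}
    {ρ : M →ₗ[R] M →ₗ[R] M} (hB : B.IsSymm) (hskew : ∀ w, B.IsSkewAdjoint (ρ w)) (halt : ρ.IsAlt)
    (w u v : M) : B (ρ w u) v = -B (ρ v u) w :=
  calc
    B (ρ w u) v = -B (ρ u w) v := by rw [← halt.neg u w, LinearMap.map_neg₂]
    _ = B w (ρ u v) := by rw [hskew u w v, Pi.neg_apply, map_neg, neg_neg]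
    _ = -B w (ρ v u) := by rw [← halt.neg v u, map_neg]
    _ = -B (ρ v u) w := by rw [hB.eq w (ρ v u)]

theorem inner_swap_of_skew_of_isAlt {E : Type*} [SeminormedAddCommGroup E] [InnerProductSpace ℝ E]
    {ρ : E →ₗ[ℝ] E →ₗ[ℝ] E} (hskew : ∀ w u v : E, ⟪ρ w u, v⟫ = -⟪u, ρ w v⟫) (halt : ρ.IsAlt)
    (w u v : E) : ⟪ρ w u, v⟫ = -⟪ρ v u, w⟫ := by
  have hskew_innerₗ (w : E) : (innerₗ E).IsSkewAdjoint (ρ w) := fun u v => by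
    simpa only [innerₗ_apply_apply, Pi.neg_apply, inner_neg_right] using hskew w u v
  have hsymm : LinearMap.BilinForm.IsSymm (innerₗ E) := ⟨fun u v => real_inner_comm v u⟩
  exact bilinForm_swap_of_isSkewAdjoint_of_isAlt hsymm hskew_innerₗ halt w u v

section ModifiedCotangent

variable {V}

theorem mcQ_eq_dualProd (x y : Module.Dual ℝ V × V) : mcQ V x y = LinearMap.dualProd ℝ V x y := by
  rw [mcQ, LinearMap.dualProd_apply_apply, add_comm]

theorem mcQ_comm (x y : Module.Dual ℝ V × V) : mcQ V x y = mcQ V y x :=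
  add_comm _ _

theorem eq_zero_of_forall_mcQ_eq_zero {x : Module.Dual ℝ V × V} (hx : ∀ y, mcQ V x y = 0) :
    x = 0 := by
  have hsep : (LinearMap.dualProd ℝ V).SeparatingLeft :=
    (LinearMap.separatingLeft_dualProd ℝ V).mpr (Module.eval_apply_injective ℝ)
  exact hsep x fun y => (mcQ_eq_dualProd x y).symm.trans (hx y)

theorem mcQ_mcBracket_left (ρ : V →ₗ[ℝ] V →ₗ[ℝ] V) (x y z : Module.Dual ℝ V × V) :
    mcQ V (mcBracket V ρ x y) z = ⟪ρ z.2 x.2, y.2⟫ := by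
  simp only [mcQ, mcBracket, mcPhi, LinearMap.coe_mk, AddHom.coe_mk, map_zero, add_zero]

theorem mcQ_mcBracket_add_mcQ_mcBracket {ρ : V →ₗ[ℝ] V →ₗ[ℝ] V}
    (hskew : ∀ w u v : V, ⟪ρ w u, v⟫ = -⟪u, ρ w v⟫) (halt : ρ.IsAlt)
    (x y z : Module.Dual ℝ V × V) :
    mcQ V (mcBracket V ρ x y) z + mcQ V y (mcBracket V ρ x z) = 0 := by
  rw [mcQ_comm y, mcQ_mcBracket_left, mcQ_mcBracket_left,
    inner_swap_of_skew_of_isAlt hskew halt z.2 x.2 y.2, neg_add_cancel]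

theorem modified_cotangent_neutral_form_ad_invariant_general
    (ρ : V →ₗ[ℝ] V →ₗ[ℝ] V)
    (hskew : ∀ w u v : V, ⟪ρ w u, v⟫ = -⟪u, ρ w v⟫)
    (hnull : ∀ u : V, ρ u u = 0) :
    (∀ x y : Module.Dual ℝ V × V, mcQ V x y = mcQ V y x) ∧
    (∀ x : Module.Dual ℝ V × V, (∀ y, mcQ V x y = 0) → x = 0) ∧
    (∀ x y z : Module.Dual ℝ V × V,
        mcQ V (mcBracket V ρ x y) z + mcQ V y (mcBracket V ρ x z) = 0) :=
  ⟨mcQ_comm, fun _ => eq_zero_of_forall_mcQ_eq_zero, mcQ_mcBracket_add_mcQ_mcBracket hskew hnull⟩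

end ModifiedCotangent

/-- on the modified cotangent Lie algebra `n = V* ⊕ V`, the canonical
neutral symmetric bilinear form `Q((ξ,u),(η,v)) = ξ(v) + η(u)` is nondegenerate and
ad-invariant: `Q([x,y],z) + Q(y,[x,z]) = 0` for all `x, y, z ∈ n`. -/
theorem modified_cotangent_neutral_form_ad_invariant
    [FiniteDimensional ℝ V] (ρ : V →ₗ[ℝ] V →ₗ[ℝ] V)
    (hskew : ∀ w u v : V, ⟪ρ w u, v⟫ = - ⟪u, ρ w v⟫)
    (hnull : ∀ u : V, ρ u u = 0) :
    (∀ x y : Module.Dual ℝ V × V, mcQ V x y = mcQ V y x) ∧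
    (∀ x : Module.Dual ℝ V × V, (∀ y, mcQ V x y = 0) → x = 0) ∧
    (∀ x y z : Module.Dual ℝ V × V,
        mcQ V (mcBracket V ρ x y) z + mcQ V y (mcBracket V ρ x z) = 0) :=
  modified_cotangent_neutral_form_ad_invariant_general ρ hskew hnull
end

section
/- Let n = V* ⊕ V be the modified cotangent Lie algebra associated to an injective linear map ρ : V → End(V) with each ρ(w) skew-adjoint and ρ(u)u = 0 for all u. Then the center of n equals V* ⊕ 0 and the commutator ideal [n,n] also equals V* ⊕ 0; in particular the center coincides with the commutator ideal. -/
open scoped RealInnerProductSpace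

variable (V : Type*) [NormedAddCommGroup V] [InnerProductSpace ℝ V]

/-!
Taking `v = ρ(w)u` in `φ(u,v)(w) = ⟨ρ(w)u, v⟩` gives `‖ρ(w)u‖²`. Hence `φ(u,·) = 0` exactly when
`ρ(w)u = 0` for all `w`, and all `φ(u,v)` vanish at `w` exactly when `ρ(w) = 0`. For any `ρ` the
elements `x` with `[x,·] = 0` therefore form `V* ⊕ ker ρ.flip`, and by duality in finite dimension
the brackets span `(ker ρ)^⊥ ⊕ 0`. The condition `ρ(u)u = 0` says that `ρ` is alternating, so that
`ker ρ.flip = ker ρ`.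
-/

section

variable {V}

theorem forall_mcPhi_apply_eq_zero_iff {ρ : V →ₗ[ℝ] V →ₗ[ℝ] V} {u w : V} :
    (∀ v, mcPhi V ρ u v w = 0) ↔ ρ w u = 0 := by
  refine ⟨fun h ↦ inner_self_eq_zero.mp (h (ρ w u)), fun h v ↦ ?_⟩
  change ⟪ρ w u, v⟫ = 0
  rw [h, inner_zero_left]

theorem forall_mcPhi_eq_zero_iff {ρ : V →ₗ[ℝ] V →ₗ[ℝ] V} {u : V} :
    (∀ v, mcPhi V ρ u v = 0) ↔ u ∈ LinearMap.ker ρ.flip := by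
  simp only [LinearMap.mem_ker, LinearMap.ext_iff, LinearMap.zero_apply, LinearMap.flip_apply,
    ← forall_mcPhi_apply_eq_zero_iff]
  exact forall_comm

theorem setOf_forall_mcBracket_eq_zero (ρ : V →ₗ[ℝ] V →ₗ[ℝ] V) :
    {x : Module.Dual ℝ V × V | ∀ y, mcBracket V ρ x y = 0} =
      ((⊤ : Submodule ℝ (Module.Dual ℝ V)).prod (LinearMap.ker ρ.flip) :
        Set (Module.Dual ℝ V × V)) := by
  ext ⟨ξ, u⟩
  simp only [Set.mem_ofPred_eq, SetLike.mem_coe, Submodule.mem_prod, Submodule.mem_top, true_and,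
    ← forall_mcPhi_eq_zero_iff, mcBracket, Prod.forall, Prod.mk_eq_zero, and_true, forall_const]

theorem dualCoannihilator_span_mcPhi (ρ : V →ₗ[ℝ] V →ₗ[ℝ] V) :
    (Submodule.span ℝ {f | ∃ u v, mcPhi V ρ u v = f}).dualCoannihilator = LinearMap.ker ρ := by
  apply SetLike.coe_injective
  rw [Submodule.coe_dualCoannihilator_span]
  ext w
  constructor
  · exact fun hw ↦ LinearMap.ext fun u ↦
      forall_mcPhi_apply_eq_zero_iff.mp fun v ↦ hw _ ⟨u, v, rfl⟩
  · rintro hw _ ⟨u, v, rfl⟩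
    exact forall_mcPhi_apply_eq_zero_iff.mpr (LinearMap.congr_fun hw u) v

theorem span_mcPhi [FiniteDimensional ℝ V] (ρ : V →ₗ[ℝ] V →ₗ[ℝ] V) :
    Submodule.span ℝ {f | ∃ u v, mcPhi V ρ u v = f} = (LinearMap.ker ρ).dualAnnihilator := by
  rw [← dualCoannihilator_span_mcPhi, Subspace.dualCoannihilator_dualAnnihilator_eq]

theorem setOf_mcBracket_eq_image_inl (ρ : V →ₗ[ℝ] V →ₗ[ℝ] V) :
    {z : Module.Dual ℝ V × V | ∃ x y, mcBracket V ρ x y = z} =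
      LinearMap.inl ℝ (Module.Dual ℝ V) V '' {f | ∃ u v, mcPhi V ρ u v = f} := by
  ext z
  constructor
  · rintro ⟨x, y, rfl⟩
    exact ⟨_, ⟨x.2, y.2, rfl⟩, rfl⟩
  · rintro ⟨_, ⟨u, v, rfl⟩, rfl⟩
    exact ⟨(0, u), (0, v), rfl⟩

theorem span_mcBracket [FiniteDimensional ℝ V] (ρ : V →ₗ[ℝ] V →ₗ[ℝ] V) :
    Submodule.span ℝ {z : Module.Dual ℝ V × V | ∃ x y, mcBracket V ρ x y = z} =
      (LinearMap.ker ρ).dualAnnihilator.prod ⊥ := by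
  rw [setOf_mcBracket_eq_image_inl, Submodule.span_image, span_mcPhi, Submodule.map_inl]

theorem modified_cotangent_center_eq_commutator_general
    [FiniteDimensional ℝ V] (ρ : V →ₗ[ℝ] V →ₗ[ℝ] V) (hinj : Function.Injective ρ)
    (hflip : Function.Injective ρ.flip) :
    ({x : Module.Dual ℝ V × V | ∀ y, mcBracket V ρ x y = 0} =
      ((⊤ : Submodule ℝ (Module.Dual ℝ V)).prod (⊥ : Submodule ℝ V) :
        Set (Module.Dual ℝ V × V))) ∧
    (Submodule.span ℝ {z : Module.Dual ℝ V × V | ∃ x y, mcBracket V ρ x y = z} =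
      (⊤ : Submodule ℝ (Module.Dual ℝ V)).prod (⊥ : Submodule ℝ V)) := by
  constructor
  · rw [setOf_forall_mcBracket_eq_zero, LinearMap.ker_eq_bot.mpr hflip]
  · rw [span_mcBracket, LinearMap.ker_eq_bot.mpr hinj, Submodule.dualAnnihilator_bot]

end

/-- for the modified cotangent Lie algebra `n = V* ⊕ V` associated to an
injective linear `ρ` with each `ρ(w)` skew-adjoint and `ρ(u)u = 0`: the center of `n`
equals `V* ⊕ 0`, and the commutator ideal `[n,n]` also equals `V* ⊕ 0`; in particular
the center coincides with the commutator ideal. -/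
theorem modified_cotangent_center_eq_commutator
    [FiniteDimensional ℝ V] (ρ : V →ₗ[ℝ] V →ₗ[ℝ] V) (hinj : Function.Injective ρ)
    (hskew : ∀ w u v : V, ⟪ρ w u, v⟫ = - ⟪u, ρ w v⟫)
    (hnull : ∀ u : V, ρ u u = 0) :
    ({x : Module.Dual ℝ V × V | ∀ y, mcBracket V ρ x y = 0} =
      ((⊤ : Submodule ℝ (Module.Dual ℝ V)).prod (⊥ : Submodule ℝ V) :
        Set (Module.Dual ℝ V × V))) ∧
    (Submodule.span ℝ {z : Module.Dual ℝ V × V | ∃ x y, mcBracket V ρ x y = z} =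
      (⊤ : Submodule ℝ (Module.Dual ℝ V)).prod (⊥ : Submodule ℝ V)) := by
  have hker : LinearMap.ker ρ.flip = ⊥ :=
    (LinearMap.IsAlt.isRefl hnull).ker_flip_eq_bot (LinearMap.ker_eq_bot.mpr hinj)
  exact modified_cotangent_center_eq_commutator_general ρ hinj (LinearMap.ker_eq_bot.mp hker)
end

section
/- Let (n, ⟨·,·⟩) be a finite-dimensional real 2-step nilpotent Lie algebra endowed with an ad-invariant metric (a nondegenerate symmetric ad-invariant bilinear form). Then there exist m ∈ ℕ, a nondegenerate symmetric bilinear form on ℝ^m (with ℝ^m abelian), a finite-dimensional real inner product space V, and an injective linear map ρ : V → End(V) with each ρ(w) skew-adjoint and ρ(u)u = 0 for all u, such that (n, ⟨·,·⟩) is isometrically isomorphic (via a Lie algebra isomorphism that carries one bilinear form to the other) to the orthogonal direct product of ℝ^m and the modified cotangent Lie algebra V* ⊕ V with its canonical neutral form Q((ξ,u),(η,v)) = ξ(v) + η(u). -/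
/-- The data of a finite-dimensional real inner product space `(V, ip)` together with an
injective linear map `ρ : V → End(V)` with each `ρ(w)` skew-adjoint and `ρ(u)u = 0`,
from which the modified cotangent Lie algebra `V* ⊕ V` is built. -/
structure ModifiedCotangentData where
  V : Type
  [addgrp : AddCommGroup V]
  [mod : Module ℝ V]
  [findim : FiniteDimensional ℝ V]
  /-- the inner product on `V` -/
  ip : V →ₗ[ℝ] V →ₗ[ℝ] ℝ
  ip_symm : ∀ u v : V, ip u v = ip v u
  ip_posdef : ∀ v : V, v ≠ 0 → 0 < ip v v
  /-- the injective linear map `ρ : V → End(V)` -/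
  ρ : V →ₗ[ℝ] V →ₗ[ℝ] V
  ρ_inj : Function.Injective ρ
  ρ_skew : ∀ w u v : V, ip (ρ w u) v = - ip u (ρ w v)
  ρ_null : ∀ u : V, ρ u u = 0

attribute [instance] ModifiedCotangentData.addgrp ModifiedCotangentData.mod
  ModifiedCotangentData.findim

/-- The functional `φ(u,v) ∈ V*` given by `φ(u,v)(w) = ⟨ρ(w)u, v⟩₊`. -/
def ModifiedCotangentData.phi (D : ModifiedCotangentData) (u v : D.V) :
    Module.Dual ℝ D.V where
  toFun w := D.ip (D.ρ w u) v
  map_add' w w' := by simp [map_add, LinearMap.add_apply]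
  map_smul' a w := by simp [map_smul, LinearMap.smul_apply]

/-- The modified cotangent bracket on `V* ⊕ V`: `[(ξ,u),(η,v)] = (φ(u,v), 0)`. -/
def ModifiedCotangentData.bracket (D : ModifiedCotangentData) :
    Module.Dual ℝ D.V × D.V → Module.Dual ℝ D.V × D.V → Module.Dual ℝ D.V × D.V :=
  fun x y => (D.phi x.2 y.2, 0)

/-- The canonical neutral form `Q((ξ,u),(η,v)) = ξ(v) + η(u)` on `V* ⊕ V`. -/
def ModifiedCotangentData.Q (D : ModifiedCotangentData) :
    Module.Dual ℝ D.V × D.V → Module.Dual ℝ D.V × D.V → ℝ :=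
  fun x y => x.1 y.2 + y.1 x.2

/-!
Invariance gives `[n, n]^⊥ = Z(n)`, and 2-step nilpotency gives `[n, n] ⊆ Z(n)`, so `C = [n, n]` is
totally isotropic. Choose a totally isotropic `W` dual to `C`. Then `n = E ⊕ (C ⊕ W)` with
`E = (C ⊕ W)^⊥`, the form is hyperbolic on `C ⊕ W ≃ W* ⊕ W`, and `E ⊕ C ⊆ C^⊥ = Z(n)`. Hence the
bracket is determined by its values on `W`, that is, by the alternating trilinear form
`(w, u, v) ↦ ⟨[w, u], v⟩` on `W`. Any auxiliary inner product on `W` turns it into a skew-adjoint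
`ρ : W → End W`, and `ρ` is injective because its kernel is `W ∩ Z(n) = W ∩ C^⊥ = 0`.
-/

section Module

variable {R M : Type*} [Ring R] [AddCommGroup M] [Module R M] {p q r : Submodule R M}

theorem isCompl_range_subtype_sub (hpq : IsCompl p q) {f : p →ₗ[R] M} (hf : ∀ x, f x ∈ q) :
    IsCompl (LinearMap.range (p.subtype - f)) q := by
  refine ⟨Submodule.disjoint_def.2 ?_, codisjoint_iff_le_sup.2 fun x _ => ?_⟩
  · rintro _ ⟨x, rfl⟩ hx
    have hxq : (x : M) ∈ q := (q.sub_mem_iff_left (hf x)).1 hx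
    have hx0 : x = 0 := Subtype.ext (Submodule.disjoint_def.1 hpq.disjoint x x.2 hxq)
    rw [hx0, map_zero]
  · obtain ⟨y, z, hy, hz, rfl⟩ := Submodule.codisjoint_iff_exists_add_eq.1 hpq.codisjoint x
    refine Submodule.mem_sup.2 ⟨y - f ⟨y, hy⟩, ⟨⟨y, hy⟩, rfl⟩, f ⟨y, hy⟩ + z,
      q.add_mem (hf _) hz, by abel⟩

/-- The isomorphism `p × (q × r) ≃ M` of an internal direct sum `M = p ⊕ q ⊕ r`, written as a
complement `p` of `q ⊔ r` with `q` and `r` disjoint. -/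
noncomputable def prodEquivOfIsComplSup (hqr : Disjoint q r) (hp : IsCompl p (q ⊔ r)) :
    (p × (q × r)) ≃ₗ[R] M :=
  have range_coprod : LinearMap.range (q.subtype.coprod r.subtype) = q ⊔ r := by
    rw [LinearMap.range_coprod, Submodule.range_subtype, Submodule.range_subtype]
  have ker_coprod : LinearMap.ker (q.subtype.coprod r.subtype) = ⊥ := by
    rw [LinearMap.ker_coprod_of_disjoint_range _ _ (by simpa using hqr), Submodule.ker_subtype,
      Submodule.ker_subtype, Submodule.prod_bot]
  .ofBijective (p.subtype.coprod (q.subtype.coprod r.subtype))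
    ⟨by rw [← LinearMap.ker_eq_bot, LinearMap.ker_coprod_of_disjoint_range _ _
        (by simpa only [range_coprod, Submodule.range_subtype] using hp.disjoint),
        Submodule.ker_subtype, ker_coprod, Submodule.prod_bot],
      by rw [← LinearMap.range_eq_top, LinearMap.range_coprod, range_coprod,
        Submodule.range_subtype, hp.sup_eq_top]⟩

end Module

section Witt

variable {K V : Type*} [Field K] [AddCommGroup V] [Module K V] {B : LinearMap.BilinForm K V}
  {C W : Submodule K V}

theorem eq_zero_of_isCompl_orthogonal (hB : B.Nondegenerate) (hW : IsCompl W (B.orthogonal C))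
    {c : V} (hc : c ∈ C) (h : ∀ w ∈ W, B c w = 0) : c = 0 := by
  refine hB.1 c fun x => ?_
  obtain ⟨w, z, hw, hz, rfl⟩ := Submodule.codisjoint_iff_exists_add_eq.1 hW.codisjoint x
  rw [map_add, h w hw, hz c hc, add_zero]

theorem isPerfPair_of_isCompl_orthogonal [FiniteDimensional K V] (hB : B.Nondegenerate)
    (hW : IsCompl W (B.orthogonal C)) : (B.domRestrict₁₂ C W).IsPerfPair := by
  refine .of_injective ?_ ?_ <;> rw [injective_iff_map_eq_zero]
  · exact fun c hc => Subtype.ext <| eq_zero_of_isCompl_orthogonal hB hW c.2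
      fun w hw => LinearMap.congr_fun hc ⟨w, hw⟩
  · exact fun w hw => Subtype.ext <| Submodule.disjoint_def.1 hW.disjoint w w.2
      fun c hc => LinearMap.congr_fun hw ⟨c, hc⟩

/-- The identification `W* ≃ C` induced by `B` when `W` is a complement of `C^⊥`. -/
noncomputable def dualEquivOfIsCompl [FiniteDimensional K V] (hB : B.Nondegenerate)
    (hW : IsCompl W (B.orthogonal C)) : Module.Dual K W ≃ₗ[K] C :=
  haveI := isPerfPair_of_isCompl_orthogonal hB hW
  (B.domRestrict₁₂ C W).toPerfPair.symm

theorem apply_dualEquivOfIsCompl [FiniteDimensional K V] (hB : B.Nondegenerate)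
    (hW : IsCompl W (B.orthogonal C)) (ξ : Module.Dual K W) (w : W) :
    B (dualEquivOfIsCompl hB hW ξ) w = ξ w :=
  haveI := isPerfPair_of_isCompl_orthogonal hB hW
  LinearMap.congr_fun ((B.domRestrict₁₂ C W).apply_symm_toPerfPair_self ξ) w

theorem dualEquivOfIsCompl_comp_subtype [FiniteDimensional K V] (hB : B.Nondegenerate)
    (hW : IsCompl W (B.orthogonal C)) (c : C) :
    dualEquivOfIsCompl hB hW (B c ∘ₗ W.subtype) = c :=
  haveI := isPerfPair_of_isCompl_orthogonal hB hW
  (B.domRestrict₁₂ C W).toPerfPair.symm_apply_apply c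

/-- Two totally isotropic subspaces in duality under `B`. The duality is encoded by asking `W` to
be a complement of `C^⊥`. -/
structure IsWittPair (B : LinearMap.BilinForm K V) (C W : Submodule K V) : Prop where
  isotropic_left : C ≤ B.orthogonal C
  isotropic_right : W ≤ B.orthogonal W
  isCompl : IsCompl W (B.orthogonal C)

theorem exists_isWittPair [NeZero (2 : K)] [FiniteDimensional K V] (hB : B.Nondegenerate)
    (hs : B.IsSymm) (hC : C ≤ B.orthogonal C) : ∃ W, IsWittPair B C W := by
  obtain ⟨U, hU⟩ := (B.orthogonal C).exists_isCompl
  -- Shearing `U` along `C` by half of `B|_U` cancels `B|_U`.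
  let f : U →ₗ[K] V := C.subtype ∘ₗ (dualEquivOfIsCompl hB hU.symm).toLinearMap ∘ₗ
    ((2⁻¹ : K) • B.domRestrict₁₂ U U)
  have hfC (u : U) : f u ∈ C := Subtype.property _
  have hf (u v : U) : B (f u) v = 2⁻¹ * B u v := apply_dualEquivOfIsCompl hB hU.symm _ v
  have hfr (u v : U) : B u (f v) = 2⁻¹ * B u v := by rw [hs.eq, hf, hs.eq]
  have hff (u v : U) : B (f u) (f v) = 0 := hC (hfC v) _ (hfC u)
  refine ⟨_, hC, ?_, isCompl_range_subtype_sub hU.symm fun u => hC (hfC u)⟩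
  rintro _ ⟨u, rfl⟩ _ ⟨v, rfl⟩
  have h2 : (2 : K) ≠ 0 := NeZero.ne 2
  simp only [LinearMap.sub_apply, Submodule.subtype_apply, map_sub, hff, hf, hfr]
  field_simp
  ring

namespace IsWittPair

theorem disjoint (h : IsWittPair B C W) : Disjoint C W :=
  (h.isCompl.disjoint.mono_right h.isotropic_left).symm

theorem isCompl_sup_orthogonal [FiniteDimensional K V] (hB : B.Nondegenerate) (hr : B.IsRefl)
    (h : IsWittPair B C W) : IsCompl (C ⊔ W) (B.orthogonal (C ⊔ W)) := by
  rw [LinearMap.BilinForm.isCompl_orthogonal_iff_disjoint hr, Submodule.disjoint_def]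
  intro x hx hx'
  obtain ⟨c, hc, w, hw, rfl⟩ := Submodule.mem_sup.1 hx
  have hw0 : w = 0 := by
    refine Submodule.disjoint_def.1 h.isCompl.disjoint w hw ?_
    refine (Submodule.add_mem_iff_right _ (h.isotropic_left hc)).1 ?_
    exact LinearMap.BilinForm.orthogonal_le le_sup_left hx'
  subst hw0
  rw [add_zero] at hx' ⊢
  exact eq_zero_of_isCompl_orthogonal hB h.isCompl hc
    fun w hw => hr _ _ (hx' w (Submodule.mem_sup_right hw))

theorem nondegenerate_restrict_orthogonal_sup [FiniteDimensional K V] (hB : B.Nondegenerate)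
    (hr : B.IsRefl) (h : IsWittPair B C W) :
    (B.restrict (B.orthogonal (C ⊔ W))).Nondegenerate := by
  rw [LinearMap.BilinForm.restrict_nondegenerate_iff_isCompl_orthogonal hr,
    LinearMap.BilinForm.orthogonal_orthogonal hB hr]
  exact (h.isCompl_sup_orthogonal hB hr).symm

/-- The Witt decomposition `(C ⊕ W)^⊥ × (W* × W) ≃ V`, with `W*` embedded as `C` through `B`. -/
noncomputable def decomposition [FiniteDimensional K V] (hB : B.Nondegenerate) (hr : B.IsRefl)
    (h : IsWittPair B C W) : (B.orthogonal (C ⊔ W) × (Module.Dual K W × W)) ≃ₗ[K] V :=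
  ((LinearEquiv.refl K _).prodCongr
      ((dualEquivOfIsCompl hB h.isCompl).prodCongr (LinearEquiv.refl K _))).trans
    (prodEquivOfIsComplSup h.disjoint (h.isCompl_sup_orthogonal hB hr).symm)

variable [FiniteDimensional K V]

theorem decomposition_apply (hB : B.Nondegenerate) (hr : B.IsRefl) (h : IsWittPair B C W)
    (e : B.orthogonal (C ⊔ W)) (ξ : Module.Dual K W) (w : W) :
    h.decomposition hB hr (e, ξ, w) = e + (dualEquivOfIsCompl hB h.isCompl ξ + w) :=
  rfl

theorem apply_decomposition (hB : B.Nondegenerate) (hs : B.IsSymm) (h : IsWittPair B C W)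
    (x y : B.orthogonal (C ⊔ W) × (Module.Dual K W × W)) :
    B (h.decomposition hB hs.isRefl x) (h.decomposition hB hs.isRefl y) =
      B x.1 y.1 + LinearMap.dualProd K W x.2 y.2 := by
  obtain ⟨e, ξ, w⟩ := x
  obtain ⟨e', η, w'⟩ := y
  have hξ := apply_dualEquivOfIsCompl hB h.isCompl ξ w'
  have hη := apply_dualEquivOfIsCompl hB h.isCompl η w
  rw [decomposition_apply, decomposition_apply]
  set c := dualEquivOfIsCompl hB h.isCompl ξ
  set c' := dualEquivOfIsCompl hB h.isCompl η
  have hcc' : B c c' = 0 := h.isotropic_left c'.2 c c.2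
  have hww' : B w w' = 0 := h.isotropic_right w'.2 w w.2
  have hwc' : B w c' = η w := (hs.eq _ _).trans hη
  have hyperbolic : B (c + w) (c' + w') = η w + ξ w' := by
    simp only [map_add, LinearMap.add_apply, hcc', hξ, hwc', hww', zero_add, add_zero]
  have orth : B (c + w) e' = 0 := e'.2 _ (Submodule.add_mem_sup c.2 w.2)
  have orth' : B e (c' + w') = 0 := (hs.eq _ _).trans (e.2 _ (Submodule.add_mem_sup c'.2 w'.2))
  rw [LinearMap.BilinForm.add_left, map_add (B (e : V)), map_add (B (c + w : V)), orth,
    orth', hyperbolic, add_zero, zero_add, LinearMap.dualProd_apply_apply]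

end IsWittPair

end Witt

theorem exists_isSymm_posDef (V : Type*) [AddCommGroup V] [Module ℝ V] [FiniteDimensional ℝ V] :
    ∃ g : LinearMap.BilinForm ℝ V, g.IsSymm ∧ ∀ v, v ≠ 0 → 0 < g v v := by
  let e : V ≃ₗ[ℝ] EuclideanSpace ℝ (Fin (Module.finrank ℝ V)) := .ofFinrankEq _ _ (by simp)
  exact ⟨(innerₗ _).compl₁₂ e.toLinearMap e.toLinearMap,
    ⟨fun u v => real_inner_comm (e v) (e u)⟩,
    fun v hv => real_inner_self_pos.2 (e.map_ne_zero_iff.2 hv)⟩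

theorem nondegenerate_of_isSymm_posDef {V : Type*} [AddCommGroup V] [Module ℝ V]
    {g : LinearMap.BilinForm ℝ V} (hs : g.IsSymm) (hpos : ∀ v, v ≠ 0 → 0 < g v v) :
    g.Nondegenerate := by
  refine hs.isRefl.nondegenerate_iff_separatingLeft.2 fun v hv => ?_
  by_contra hv0
  exact (hpos v hv0).ne' (hv v)

/-- The derived ideal `[L, L]`. -/
abbrev derivedIdeal (R L : Type*) [CommRing R] [LieRing L] [LieAlgebra R L] : LieIdeal R L :=
  ⁅(⊤ : LieIdeal R L), (⊤ : LieIdeal R L)⁆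

section CommRing

variable {R L : Type*} [CommRing R] [LieRing L] [LieAlgebra R L] {Φ : LinearMap.BilinForm R L}

theorem lie_mem_derivedIdeal (x y : L) : ⁅x, y⁆ ∈ derivedIdeal R L :=
  LieSubmodule.lie_mem_lie (LieSubmodule.mem_top x) (LieSubmodule.mem_top y)

theorem derivedIdeal_le_center (h : ∀ x y z : L, ⁅⁅x, y⁆, z⁆ = 0) :
    derivedIdeal R L ≤ LieAlgebra.center R L :=
  (LieSubmodule.lie_le_iff _ _ _).2 fun x _ y _ z => by rw [← lie_skew, h, neg_zero]

theorem lie_add_add_of_mem_center {z z' : L} (hz : z ∈ LieAlgebra.center R L)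
    (hz' : z' ∈ LieAlgebra.center R L) (x y : L) : ⁅z + x, z' + y⁆ = ⁅x, y⁆ := by
  rw [lie_add, hz' (z + x), zero_add, add_lie, ← lie_skew, hz y, neg_zero, zero_add]

theorem apply_lie_assoc (hinv : Φ.lieInvariant L) (x y z : L) : Φ ⁅x, y⁆ z = Φ x ⁅y, z⁆ := by
  rw [← lie_skew, map_neg, LinearMap.neg_apply, hinv, neg_neg]

theorem derivedIdeal_le_orthogonal_center (hinv : Φ.lieInvariant L) :
    (derivedIdeal R L).toSubmodule ≤ Φ.orthogonal (LieAlgebra.center R L).toSubmodule := by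
  change derivedIdeal R L ≤ LieAlgebra.InvariantForm.orthogonal Φ hinv (LieAlgebra.center R L)
  refine (LieSubmodule.lie_le_iff _ _ _).2 fun x _ y _ => ?_
  rw [LieAlgebra.InvariantForm.mem_orthogonal]
  intro z hz
  rw [← apply_lie_assoc hinv, ← lie_skew, hz x, neg_zero, map_zero, LinearMap.zero_apply]

theorem orthogonal_derivedIdeal_le_center (hΦ : Φ.Nondegenerate) (hinv : Φ.lieInvariant L) :
    Φ.orthogonal (derivedIdeal R L).toSubmodule ≤ (LieAlgebra.center R L).toSubmodule :=
  fun z hz x => hΦ.2 _ fun y => by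
    rw [← apply_lie_assoc hinv]
    exact hz _ (lie_mem_derivedIdeal y x)

theorem derivedIdeal_le_orthogonal_derivedIdeal (hinv : Φ.lieInvariant L)
    (h : ∀ x y z : L, ⁅⁅x, y⁆, z⁆ = 0) :
    (derivedIdeal R L).toSubmodule ≤ Φ.orthogonal (derivedIdeal R L).toSubmodule :=
  (derivedIdeal_le_orthogonal_center hinv).trans
    (LinearMap.BilinForm.orthogonal_le (derivedIdeal_le_center h))

end CommRing

section Field

variable {K L : Type*} [Field K] [LieRing L] [LieAlgebra K L] {Φ : LinearMap.BilinForm K L}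
  {W : Submodule K L}

theorem lie_decomposition [FiniteDimensional K L] (hΦ : Φ.Nondegenerate) (hr : Φ.IsRefl)
    (hinv : Φ.lieInvariant L) (h : IsWittPair Φ (derivedIdeal K L).toSubmodule W)
    (x y : Φ.orthogonal ((derivedIdeal K L).toSubmodule ⊔ W) × (Module.Dual K W × W)) :
    ⁅h.decomposition hΦ hr x, h.decomposition hΦ hr y⁆ = ⁅(x.2.2 : L), (y.2.2 : L)⁆ := by
  have mem_center (e : Φ.orthogonal ((derivedIdeal K L).toSubmodule ⊔ W))
      (c : (derivedIdeal K L).toSubmodule) : (e + c : L) ∈ LieAlgebra.center K L :=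
    orthogonal_derivedIdeal_le_center hΦ hinv <| Submodule.add_mem _
      (LinearMap.BilinForm.orthogonal_le le_sup_left e.2) (h.isotropic_left c.2)
  rw [h.decomposition_apply, h.decomposition_apply, ← add_assoc, ← add_assoc]
  exact lie_add_add_of_mem_center (mem_center _ _) (mem_center _ _) _ _

variable [FiniteDimensional K W] {g : LinearMap.BilinForm K W}

/-- The map `ρ : W → End W` representing the trilinear form `(w, u, v) ↦ Φ ⁅w, u⁆ v` on `W` through
the nondegenerate form `g`. -/
noncomputable def bracketRep (Φ : LinearMap.BilinForm K L) (hg : g.Nondegenerate) :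
    W →ₗ[K] W →ₗ[K] W :=
  ((LieModule.toEnd K L L : L →ₗ[K] L →ₗ[K] L).domRestrict₁₂ W W).compr₂
    ((g.toDual hg).symm.toLinearMap ∘ₗ W.dualRestrict ∘ₗ Φ)

theorem apply_bracketRep (hg : g.Nondegenerate) (w u v : W) :
    g (bracketRep Φ hg w u) v = Φ ⁅(w : L), (u : L)⁆ v :=
  LinearMap.BilinForm.apply_toDual_symm_apply (hB := hg) _ v

theorem bracketRep_self (hg : g.Nondegenerate) (u : W) : bracketRep Φ hg u u = 0 :=
  hg.1 _ fun v => by rw [apply_bracketRep, lie_self, map_zero, LinearMap.zero_apply]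

theorem bracketRep_skew (hinv : Φ.lieInvariant L) (hs : Φ.IsSymm) (hg : g.Nondegenerate)
    (hgs : g.IsSymm) (w u v : W) :
    g (bracketRep Φ hg w u) v = -g u (bracketRep Φ hg w v) := by
  rw [hgs.eq u, apply_bracketRep, apply_bracketRep, hinv, hs.eq (u : L)]

theorem bracketRep_injective (hΦ : Φ.Nondegenerate) (hr : Φ.IsRefl) (hinv : Φ.lieInvariant L)
    (h : IsWittPair Φ (derivedIdeal K L).toSubmodule W) (hg : g.Nondegenerate) :
    Function.Injective (bracketRep Φ hg) := by
  refine (injective_iff_map_eq_zero _).2 fun w hw => Subtype.ext ?_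
  have lie_eq_zero (u : L) (hu : u ∈ W) : ⁅u, (w : L)⁆ = 0 := by
    rw [← lie_skew, neg_eq_zero]
    refine eq_zero_of_isCompl_orthogonal hΦ h.isCompl (lie_mem_derivedIdeal _ _) fun v hv => ?_
    rw [← apply_bracketRep hg w ⟨u, hu⟩ ⟨v, hv⟩, hw, LinearMap.zero_apply, map_zero,
      LinearMap.zero_apply]
  have mem_center : (w : L) ∈ LieAlgebra.center K L := fun x => by
    obtain ⟨u, z, hu, hz, rfl⟩ := Submodule.codisjoint_iff_exists_add_eq.1 h.isCompl.codisjoint x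
    have hz' : z ∈ LieAlgebra.center K L := orthogonal_derivedIdeal_le_center hΦ hinv hz
    rw [add_lie, lie_eq_zero u hu, ← lie_skew, hz', neg_zero, add_zero]
  exact Submodule.disjoint_def.1 h.isCompl.disjoint w w.2 fun c hc =>
    hr _ _ (derivedIdeal_le_orthogonal_center hinv hc w mem_center)

end Field

section Real

variable {L : Type} [LieRing L] [LieAlgebra ℝ L] [FiniteDimensional ℝ L]
  {Φ : LinearMap.BilinForm ℝ L} {W : Submodule ℝ L} {g : LinearMap.BilinForm ℝ W}

/-- The modified cotangent data on a Witt partner `W` of `[L, L]`, with inner product `g` and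
`ρ = bracketRep`. It is reducible so that `(cotangentData ..).V` is seen as `W`. -/
noncomputable abbrev cotangentData (hΦ : Φ.Nondegenerate) (hs : Φ.IsSymm)
    (hinv : Φ.lieInvariant L) (h : IsWittPair Φ (derivedIdeal ℝ L).toSubmodule W)
    (hgs : g.IsSymm) (hpos : ∀ v, v ≠ 0 → 0 < g v v) : ModifiedCotangentData where
  V := W
  ip := g
  ip_symm := hgs.eq
  ip_posdef := hpos
  ρ := bracketRep Φ (nondegenerate_of_isSymm_posDef hgs hpos)
  ρ_inj := bracketRep_injective hΦ hs.isRefl hinv h _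
  ρ_skew := bracketRep_skew hinv hs _ hgs
  ρ_null := bracketRep_self _

variable (hΦ : Φ.Nondegenerate) (hs : Φ.IsSymm) (hinv : Φ.lieInvariant L)
  (h : IsWittPair Φ (derivedIdeal ℝ L).toSubmodule W) (hgs : g.IsSymm)
  (hpos : ∀ v, v ≠ 0 → 0 < g v v)

theorem cotangentData_phi (u v : W) :
    (cotangentData hΦ hs hinv h hgs hpos).phi u v = Φ ⁅(u : L), (v : L)⁆ ∘ₗ W.subtype := by
  ext w
  change g (bracketRep Φ _ w u) v = Φ ⁅(u : L), (v : L)⁆ w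
  rw [apply_bracketRep, apply_lie_assoc hinv, hs.eq]

theorem lie_decomposition_eq_decomposition_bracket
    (x y : Φ.orthogonal ((derivedIdeal ℝ L).toSubmodule ⊔ W) × (Module.Dual ℝ W × W)) :
    ⁅h.decomposition hΦ hs.isRefl x, h.decomposition hΦ hs.isRefl y⁆ =
      h.decomposition hΦ hs.isRefl
        (0, (cotangentData hΦ hs hinv h hgs hpos).bracket x.2 y.2) := by
  have hdual := dualEquivOfIsCompl_comp_subtype hΦ h.isCompl
    ⟨⁅(x.2.2 : L), (y.2.2 : L)⁆, lie_mem_derivedIdeal _ _⟩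
  rw [lie_decomposition hΦ hs.isRefl hinv, ModifiedCotangentData.bracket,
    cotangentData_phi hΦ hs hinv h hgs hpos, h.decomposition_apply, hdual,
    Submodule.coe_zero, Submodule.coe_zero, zero_add, add_zero]

end Real

/-- a finite-dimensional real 2-step nilpotent Lie algebra `(n, ⟨·,·⟩)`
with an ad-invariant metric is isometrically isomorphic (via a Lie algebra isomorphism
carrying one bilinear form to the other) to the orthogonal direct product of an abelian
`ℝ^m` with a nondegenerate symmetric bilinear form and a modified cotangent Lie algebra
`V* ⊕ V` with its canonical neutral form `Q`. -/
theorem two_step_ad_invariant_classification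
    (n : Type) [LieRing n] [LieAlgebra ℝ n] [FiniteDimensional ℝ n]
    (form : n →ₗ[ℝ] n →ₗ[ℝ] ℝ)
    (hsymm : ∀ x y : n, form x y = form y x)
    (hnondeg : ∀ x : n, (∀ y : n, form x y = 0) → x = 0)
    (hadinv : ∀ x y z : n, form ⁅x, y⁆ z + form y ⁅x, z⁆ = 0)
    (h2step : (∃ x y : n, ⁅x, y⁆ ≠ 0) ∧ ∀ x y z : n, ⁅⁅x, y⁆, z⁆ = 0) :
    ∃ (m : ℕ) (Bm : (Fin m → ℝ) →ₗ[ℝ] (Fin m → ℝ) →ₗ[ℝ] ℝ),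
      (∀ a b : Fin m → ℝ, Bm a b = Bm b a) ∧
      (∀ a : Fin m → ℝ, (∀ b, Bm a b = 0) → a = 0) ∧
      ∃ (D : ModifiedCotangentData)
        (f : n ≃ₗ[ℝ] (Fin m → ℝ) × (Module.Dual ℝ D.V × D.V)),
        (∀ x y : n, f ⁅x, y⁆ = ((0 : Fin m → ℝ), D.bracket (f x).2 (f y).2)) ∧
        (∀ x y : n, form x y = Bm (f x).1 (f y).1 + D.Q (f x).2 (f y).2) := by
  have hs : LinearMap.BilinForm.IsSymm form := ⟨hsymm⟩
  have hΦ : form.Nondegenerate := hs.isRefl.nondegenerate_iff_separatingLeft.2 hnondeg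
  have hinv : LinearMap.BilinForm.lieInvariant n form := fun x y z =>
    eq_neg_of_add_eq_zero_left (hadinv x y z)
  obtain ⟨W, hW⟩ := exists_isWittPair hΦ hs
    (derivedIdeal_le_orthogonal_derivedIdeal hinv h2step.2)
  obtain ⟨g, hgs, hpos⟩ := exists_isSymm_posDef W
  let b := (Module.finBasis ℝ
    (LinearMap.BilinForm.orthogonal form ((derivedIdeal ℝ n).toSubmodule ⊔ W))).equivFun
  let d := hW.decomposition hΦ hs.isRefl
  let f := d.symm.trans (b.prodCongr (.refl ℝ _))
  have hf x : f (d x) = (b x.1, x.2) := by simp [f]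
  have hBm := (hW.nondegenerate_restrict_orthogonal_sup hΦ hs.isRefl).congr b
  refine ⟨_, _, fun a a' => hsymm (b.symm a) (b.symm a'), hBm.1,
    cotangentData hΦ hs hinv hW hgs hpos, f, d.surjective.forall₂.2 fun x y => ?_,
    d.surjective.forall₂.2 fun x y => ?_⟩
  · rw [lie_decomposition_eq_decomposition_bracket hΦ hs hinv hW hgs hpos, hf, hf, hf, map_zero]
  · rw [hW.apply_decomposition hΦ hs, LinearMap.dualProd_apply_apply, hf, hf,
      LinearMap.BilinForm.congr_apply, b.symm_apply_apply, b.symm_apply_apply, add_comm (y.2.1 _)]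
    rfl
end

section
/- The set Γ = {(k₁, k₂, k₃, 2k₄, k₅, 2k₆) : k₁,…,k₆ ∈ ℤ} is a subgroup of the group (ℝ⁶, ·), where · is the multiplication (x₁,…,x₆)·(y₁,…,y₆) = (x₁+y₁+½(x₄y₅−x₅y₄), x₂+y₂+½(x₄y₆−x₆y₄), x₃+y₃+½(x₅y₆−x₆y₅), x₄+y₄, x₅+y₅, x₆+y₆). -/
/-- The multiplication on `ℝ⁶` modelling the simply connected Lie group `T*H₃`
(coordinates indexed by `0,…,5` correspond to `x₁,…,x₆`). -/
noncomputable def h3Mul (x y : Fin 6 → ℝ) : Fin 6 → ℝ :=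
  ![x 0 + y 0 + (1/2) * (x 3 * y 4 - x 4 * y 3),
    x 1 + y 1 + (1/2) * (x 3 * y 5 - x 5 * y 3),
    x 2 + y 2 + (1/2) * (x 4 * y 5 - x 5 * y 4),
    x 3 + y 3, x 4 + y 4, x 5 + y 5]

/-- The set `Γ = {(k₁, k₂, k₃, 2k₄, k₅, 2k₆) : kᵢ ∈ ℤ}`. -/
def h3Gamma : Set (Fin 6 → ℝ) :=
  {x | ∃ k : Fin 6 → ℤ,
    x 0 = k 0 ∧ x 1 = k 1 ∧ x 2 = k 2 ∧ x 3 = 2 * k 3 ∧ x 4 = k 4 ∧ x 5 = 2 * k 5}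

/-!
The Baker–Campbell–Hausdorff formula for a 2-step nilpotent Lie algebra reads
`x · y = x + y + ½[x, y]`, so an additive subgroup `L` with `½[L, L] ⊆ L` is also a subgroup for
`·`. For a rectangular lattice `∏ ℤ wᵢ` bilinearity reduces this condition to the generators:
`½ w₄ w₅ ∈ ℤ w₁`, `½ w₄ w₆ ∈ ℤ w₂` and `½ w₅ w₆ ∈ ℤ w₃`. For `Γ`, where
`w = (1, 1, 1, 2, 1, 2)`, these products are `1`, `2` and `1`.
-/

/-- The rectangular lattice `∏ ℤ wᵢ` of vectors whose `i`-th coordinate is an integer multiple of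
`wᵢ`; some `wᵢ` may vanish. -/
def rectLattice {ι A : Type*} [AddGroup A] (w : ι → A) : AddSubgroup (ι → A) :=
  AddSubgroup.pi Set.univ fun i ↦ AddSubgroup.zmultiples (w i)

theorem mem_rectLattice {ι A : Type*} [AddGroup A] {w x : ι → A} :
    x ∈ rectLattice w ↔ ∀ i, x i ∈ AddSubgroup.zmultiples (w i) := by
  simp [rectLattice, AddSubgroup.mem_pi]

section Bracket

variable {R : Type*} [CommRing R]

/-- The Lie bracket of `𝔱*𝔥₃`, over any commutative ring, in the coordinates of `h3Mul`. It takes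
values in the center spanned by the first three coordinates. -/
def h3Bracket (x y : Fin 6 → R) : Fin 6 → R :=
  ![x 3 * y 4 - x 4 * y 3, x 3 * y 5 - x 5 * y 3, x 4 * y 5 - x 5 * y 4, 0, 0, 0]

theorem mul_mul_sub_mul_mem {S : AddSubgroup R} {r a b x x' y y' : R} (hab : r * (a * b) ∈ S)
    (hx : x ∈ AddSubgroup.zmultiples a) (hx' : x' ∈ AddSubgroup.zmultiples b)
    (hy : y ∈ AddSubgroup.zmultiples a) (hy' : y' ∈ AddSubgroup.zmultiples b) :
    r * (x * y' - x' * y) ∈ S := by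
  obtain ⟨m, rfl⟩ := AddSubgroup.mem_zmultiples_iff.mp hx
  obtain ⟨m', rfl⟩ := AddSubgroup.mem_zmultiples_iff.mp hx'
  obtain ⟨n, rfl⟩ := AddSubgroup.mem_zmultiples_iff.mp hy
  obtain ⟨n', rfl⟩ := AddSubgroup.mem_zmultiples_iff.mp hy'
  have factor_det : r * ((m • a) * (n' • b) - (m' • b) * (n • a)) =
      (m * n' - m' * n) • (r * (a * b)) := by
    simp only [zsmul_eq_mul]
    push_cast
    ring
  rw [factor_det]
  exact zsmul_mem hab _

theorem smul_h3Bracket_mem_rectLattice {r : R} {w x y : Fin 6 → R}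
    (h₀ : r * (w 3 * w 4) ∈ AddSubgroup.zmultiples (w 0))
    (h₁ : r * (w 3 * w 5) ∈ AddSubgroup.zmultiples (w 1))
    (h₂ : r * (w 4 * w 5) ∈ AddSubgroup.zmultiples (w 2))
    (hx : x ∈ rectLattice w) (hy : y ∈ rectLattice w) :
    r • h3Bracket x y ∈ rectLattice w := by
  rw [mem_rectLattice] at hx hy ⊢
  simpa [Fin.forall_fin_succ, h3Bracket, zero_mem] using
    And.intro (mul_mul_sub_mul_mem h₀ (hx 3) (hx 4) (hy 3) (hy 4))
      (And.intro (mul_mul_sub_mul_mem h₁ (hx 3) (hx 5) (hy 3) (hy 5))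
        (mul_mul_sub_mul_mem h₂ (hx 4) (hx 5) (hy 4) (hy 5)))

end Bracket

theorem h3Mul_eq_add_half_smul_h3Bracket (x y : Fin 6 → ℝ) :
    h3Mul x y = x + y + (1 / 2 : ℝ) • h3Bracket x y := by
  ext i
  fin_cases i <;> simp [h3Mul, h3Bracket]

theorem h3Mul_mem {L : AddSubgroup (Fin 6 → ℝ)}
    (hL : ∀ x ∈ L, ∀ y ∈ L, (1 / 2 : ℝ) • h3Bracket x y ∈ L) {x y : Fin 6 → ℝ}
    (hx : x ∈ L) (hy : y ∈ L) : h3Mul x y ∈ L := by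
  rw [h3Mul_eq_add_half_smul_h3Bracket]
  exact add_mem (add_mem hx hy) (hL x hx y hy)

/-- The side lengths of the rectangular lattice `Γ`. -/
def h3GammaSides : Fin 6 → ℝ := ![1, 1, 1, 2, 1, 2]

theorem coe_rectLattice_h3GammaSides : (rectLattice h3GammaSides : Set (Fin 6 → ℝ)) = h3Gamma := by
  ext x
  rw [SetLike.mem_coe, mem_rectLattice]
  simp only [AddSubgroup.mem_zmultiples_iff, Classical.skolem]
  simp [h3Gamma, h3GammaSides, Fin.forall_fin_succ, eq_comm, mul_comm]

theorem half_smul_h3Bracket_mem_rectLattice_h3GammaSides {x y : Fin 6 → ℝ}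
    (hx : x ∈ rectLattice h3GammaSides) (hy : y ∈ rectLattice h3GammaSides) :
    (1 / 2 : ℝ) • h3Bracket x y ∈ rectLattice h3GammaSides := by
  refine smul_h3Bracket_mem_rectLattice ?_ ?_ ?_ hx hy <;> rw [AddSubgroup.mem_zmultiples_iff]
  · exact ⟨1, by simp [h3GammaSides]⟩
  · exact ⟨2, by simp [h3GammaSides]⟩
  · exact ⟨1, by simp [h3GammaSides]⟩

/-- `Γ = {(k₁,k₂,k₃,2k₄,k₅,2k₆) : kᵢ ∈ ℤ}` is a subgroup of the group
`(ℝ⁶, ·)` with the `T*H₃` multiplication: it contains the identity `0`, and is closed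
under the multiplication and under the inversion `x ↦ -x`. -/
theorem h3Gamma_subgroup :
    (0 : Fin 6 → ℝ) ∈ h3Gamma ∧
    (∀ x y : Fin 6 → ℝ, x ∈ h3Gamma → y ∈ h3Gamma → h3Mul x y ∈ h3Gamma) ∧
    (∀ x : Fin 6 → ℝ, x ∈ h3Gamma → -x ∈ h3Gamma) := by
  simp only [← coe_rectLattice_h3GammaSides, SetLike.mem_coe]
  exact ⟨zero_mem _,
    fun _ _ ↦ h3Mul_mem fun _ hx _ hy ↦ half_smul_h3Bracket_mem_rectLattice_h3GammaSides hx hy,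
    fun _ ↦ neg_mem⟩
end

section
/- On the 5-dimensional real vector space with basis e₁,…,e₅, the alternating bilinear bracket determined by [e₁,e₂] = e₃, [e₁,e₃] = e₄, [e₂,e₃] = e₅ (all other basis brackets zero) satisfies the Jacobi identity and defines a 3-step nilpotent Lie algebra a(1,2) (nonzero triple brackets exist, all quadruple brackets vanish). Moreover the symmetric bilinear form Q determined by Q(e₁,e₁) = −1, Q(e₁,e₅) = 1, Q(e₂,e₄) = −1, Q(e₃,e₃) = 1 (all other pairings of basis vectors zero) is nondegenerate and ad-invariant: Q([x,y],z) + Q(y,[x,z]) = 0 for all x,y,z. -/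
/-- The bracket on `ℝ⁵` determined by `[e₁,e₂] = e₃`, `[e₁,e₃] = e₄`, `[e₂,e₃] = e₅`
(the free 3-step nilpotent Lie algebra `a(1,2)`); `eᵢ` is the `i`-th standard basis
vector, indexed by `0,…,4`. -/
def a12Bracket (x y : Fin 5 → ℝ) : Fin 5 → ℝ :=
  ![0, 0,
    x 0 * y 1 - x 1 * y 0,
    x 0 * y 2 - x 2 * y 0,
    x 1 * y 2 - x 2 * y 1]

/-- The symmetric bilinear form `Q` with `Q(e₁,e₁) = −1`, `Q(e₁,e₅) = 1`,
`Q(e₂,e₄) = −1`, `Q(e₃,e₃) = 1` and all other pairings of basis vectors zero. -/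
def a12Q (x y : Fin 5 → ℝ) : ℝ :=
  -(x 0 * y 0) + x 0 * y 4 + x 4 * y 0 - x 1 * y 3 - x 3 * y 1 + x 2 * y 2

/-!
Write `π x = (x₀, x₁, x₂)` and `ι u = (0, 0, u₂, -u₁, u₀)`. Then `[x, y] = ι (π x × π y)`, and `ι`
is the adjoint of `π`: `Q(ι u, z) = u · π z`. Hence `Q([x, y], z)` is the triple product of `π x`,
`π y`, `π z`, which is alternating: this is ad-invariance. As `Q` is symmetric, `π ∘ ι` is
self-adjoint for the dot product, and for self-adjoint `S` on three-dimensional space the cyclic sum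
of `S (a × b) × c` vanishes: this is the Jacobi identity. Finally `π (ι u) = (u · k) k` with
`k = (0, 0, 1)`, so a triple bracket is a multiple of `ι (k × π z)`, which `π` kills because
`k × π z` is orthogonal to `k`.
-/

open scoped Matrix

section CrossBracket

variable {R M : Type*} [CommRing R]

theorem selfAdjoint_comp_of_adjoint {n : Type*} [Fintype n] {π : M → n → R} {ι : (n → R) → M}
    {B : M → M → R} (hB : ∀ x y, B x y = B y x) (hπι : ∀ u z, B (ι u) z = u ⬝ᵥ π z)
    (u v : n → R) :
    π (ι u) ⬝ᵥ v = u ⬝ᵥ π (ι v) := by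
  rw [dotProduct_comm, ← hπι, hB, hπι]

theorem jacobi_mulVec_cross {A : Matrix (Fin 3) (Fin 3) R} (hA : A.IsSymm)
    (a b c : Fin 3 → R) :
    (A *ᵥ a ⨯₃ b) ⨯₃ c + (A *ᵥ b ⨯₃ c) ⨯₃ a + (A *ᵥ c ⨯₃ a) ⨯₃ b = 0 := by
  have h₁₀ : A 1 0 = A 0 1 := hA.apply 0 1
  have h₂₀ : A 2 0 = A 0 2 := hA.apply 0 2
  have h₂₁ : A 2 1 = A 1 2 := hA.apply 1 2
  ext i
  fin_cases i <;>
    simp only [Fin.zero_eta, Fin.mk_one, Fin.reduceFinMk, Pi.add_apply, Pi.zero_apply, cross_apply,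
      Matrix.mulVec, dotProduct, Fin.sum_univ_three, Matrix.cons_val, h₁₀, h₂₀, h₂₁] <;>
    ring

theorem jacobi_selfAdjoint_cross {S : (Fin 3 → R) →ₗ[R] Fin 3 → R}
    (hS : ∀ u v, S u ⬝ᵥ v = u ⬝ᵥ S v) (a b c : Fin 3 → R) :
    S (a ⨯₃ b) ⨯₃ c + S (b ⨯₃ c) ⨯₃ a + S (c ⨯₃ a) ⨯₃ b = 0 := by
  have hA : (LinearMap.toMatrix' S).IsSymm := by
    ext i j
    simpa using hS (Pi.single i 1) (Pi.single j 1)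
  simpa only [LinearMap.toMatrix'_mulVec] using jacobi_mulVec_cross hA a b c

variable [AddCommGroup M] [Module R M]

/-- The pullback of the cross product along `π`, pushed forward along `ι`. It is the bracket of a
Lie algebra on `M` whenever `π ∘ ι` is self-adjoint for the dot product. -/
def crossBracket (π : M →ₗ[R] Fin 3 → R) (ι : (Fin 3 → R) →ₗ[R] M) : M →ₗ[R] M →ₗ[R] M :=
  (crossProduct.compl₁₂ π π).compr₂ ι

variable {π : M →ₗ[R] Fin 3 → R} {ι : (Fin 3 → R) →ₗ[R] M}

theorem crossBracket_apply (x y : M) : crossBracket π ι x y = ι (π x ⨯₃ π y) :=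
  rfl

theorem crossBracket_self (x : M) : crossBracket π ι x x = 0 := by
  rw [crossBracket_apply, cross_self, map_zero]

theorem crossBracket_jacobi (hS : ∀ u v, π (ι u) ⬝ᵥ v = u ⬝ᵥ π (ι v)) (x y z : M) :
    crossBracket π ι (crossBracket π ι x y) z + crossBracket π ι (crossBracket π ι y z) x +
      crossBracket π ι (crossBracket π ι z x) y = 0 := by
  have h := jacobi_selfAdjoint_cross (S := π ∘ₗ ι) hS (π x) (π y) (π z)
  simp only [LinearMap.comp_apply] at h
  simp only [crossBracket_apply, ← map_add, h, map_zero]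

theorem crossBracket_crossBracket_crossBracket_eq_zero {k : Fin 3 → R}
    (hk : ∀ u, π (ι u) = (u ⬝ᵥ k) • k) (x y z w : M) :
    crossBracket π ι (crossBracket π ι (crossBracket π ι x y) z) w = 0 := by
  have horth (v : Fin 3 → R) : k ⨯₃ v ⬝ᵥ k = 0 := by rw [dotProduct_comm, dot_self_cross]
  simp only [crossBracket_apply, hk, map_smul, LinearMap.smul_apply, horth, smul_zero, zero_smul,
    map_zero, LinearMap.zero_apply]

theorem crossBracket_adInvariant {B : M → M → R} (hB : ∀ x y, B x y = B y x)
    (hπι : ∀ u z, B (ι u) z = u ⬝ᵥ π z) (x y z : M) :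
    B (crossBracket π ι x y) z + B y (crossBracket π ι x z) = 0 := by
  have htriple (a b c : Fin 3 → R) : a ⨯₃ b ⬝ᵥ c = a ⬝ᵥ b ⨯₃ c := by
    rw [dotProduct_comm, triple_product_permutation]
  calc B (crossBracket π ι x y) z + B y (crossBracket π ι x z)
      = π x ⨯₃ π y ⬝ᵥ π z + π x ⨯₃ π z ⬝ᵥ π y := by
        rw [hB y, crossBracket_apply, crossBracket_apply, hπι, hπι]
    _ = π x ⬝ᵥ (π y ⨯₃ π z + π z ⨯₃ π y) := by rw [htriple, htriple, dotProduct_add]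
    _ = 0 := by rw [cross_anticomm', dotProduct_zero]

end CrossBracket

section A12

/-- The quotient of `a(1,2)` by its centre, the span of `e₄, e₅`, in coordinates. -/
def a12Proj : (Fin 5 → ℝ) →ₗ[ℝ] Fin 3 → ℝ where
  toFun x := ![x 0, x 1, x 2]
  map_add' _ _ := by simp
  map_smul' _ _ := by simp

/-- The embedding of `ℝ³` onto the derived algebra of `a(1,2)`, the span of `e₃, e₄, e₅`, normalised
to be the adjoint of `a12Proj` for the dot product and `Q`. -/
def a12Incl : (Fin 3 → ℝ) →ₗ[ℝ] Fin 5 → ℝ where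
  toFun u := ![0, 0, u 2, -u 1, u 0]
  map_add' _ _ := by simp [add_comm]
  map_smul' _ _ := by simp

theorem a12Bracket_eq_crossBracket (x y : Fin 5 → ℝ) :
    a12Bracket x y = crossBracket a12Proj a12Incl x y := by
  simp [a12Bracket, crossBracket_apply, a12Proj, a12Incl, cross_apply]

theorem a12Proj_a12Incl (u : Fin 3 → ℝ) :
    a12Proj (a12Incl u) = (u ⬝ᵥ Pi.single 2 1) • Pi.single 2 1 := by
  ext i
  fin_cases i <;> simp [a12Proj, a12Incl]

theorem a12Q_comm (x y : Fin 5 → ℝ) : a12Q x y = a12Q y x := by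
  unfold a12Q
  ring

theorem a12Q_a12Incl (u : Fin 3 → ℝ) (z : Fin 5 → ℝ) :
    a12Q (a12Incl u) z = u ⬝ᵥ a12Proj z := by
  simp [a12Q, a12Incl, a12Proj, dotProduct, Fin.sum_univ_three]

theorem eq_zero_of_forall_a12Q_eq_zero {x : Fin 5 → ℝ} (hx : ∀ y, a12Q x y = 0) : x = 0 := by
  have h₀ : x 0 = 0 := by simpa [a12Q] using hx (Pi.single 4 1)
  have h₁ : x 1 = 0 := by simpa [a12Q] using hx (Pi.single 3 1)
  have h₂ : x 2 = 0 := by simpa [a12Q] using hx (Pi.single 2 1)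
  have h₃ : x 3 = 0 := by simpa [a12Q] using hx (Pi.single 1 1)
  have h₄ : x 4 = 0 := by simpa [a12Q, h₀] using hx (Pi.single 0 1)
  ext i
  fin_cases i <;> assumption

theorem a12Bracket_single_zero_one :
    a12Bracket (Pi.single 0 1) (Pi.single 1 1) = Pi.single 2 1 := by
  ext i
  fin_cases i <;> simp [a12Bracket]

theorem a12Bracket_single_zero_two :
    a12Bracket (Pi.single 0 1) (Pi.single 2 1) = Pi.single 3 1 := by
  ext i
  fin_cases i <;> simp [a12Bracket]

theorem a12Bracket_single_one_two :
    a12Bracket (Pi.single 1 1) (Pi.single 2 1) = Pi.single 4 1 := by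
  ext i
  fin_cases i <;> simp [a12Bracket]

theorem a12Bracket_a12Bracket_single_ne_zero :
    a12Bracket (a12Bracket (Pi.single 0 1) (Pi.single 1 1)) (Pi.single 0 1) ≠ 0 := by
  rw [a12Bracket_single_zero_one]
  intro h
  simpa [a12Bracket] using congrFun h 3

end A12

/-- on the 5-dimensional real vector space with basis `e₁,…,e₅`, the
alternating bilinear bracket determined by `[e₁,e₂] = e₃`, `[e₁,e₃] = e₄`,
`[e₂,e₃] = e₅` satisfies the Jacobi identity and defines a 3-step nilpotent Lie algebra
`a(1,2)` (some triple bracket is nonzero, all quadruple brackets vanish); moreover the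
symmetric bilinear form `Q` with `Q(e₁,e₁) = −1`, `Q(e₁,e₅) = 1`, `Q(e₂,e₄) = −1`,
`Q(e₃,e₃) = 1` (other basis pairings zero) is nondegenerate and ad-invariant. -/
theorem a12_three_step_ad_invariant :
    (a12Bracket (fun i => if i = 0 then 1 else 0) (fun i => if i = 1 then 1 else 0) =
      fun i => if i = 2 then 1 else 0) ∧
    (a12Bracket (fun i => if i = 0 then 1 else 0) (fun i => if i = 2 then 1 else 0) =
      fun i => if i = 3 then 1 else 0) ∧
    (a12Bracket (fun i => if i = 1 then 1 else 0) (fun i => if i = 2 then 1 else 0) =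
      fun i => if i = 4 then 1 else 0) ∧
    (∀ (a : ℝ) (x y z : Fin 5 → ℝ),
        a12Bracket (a • x + y) z = a • a12Bracket x z + a12Bracket y z) ∧
    (∀ (a : ℝ) (x y z : Fin 5 → ℝ),
        a12Bracket x (a • y + z) = a • a12Bracket x y + a12Bracket x z) ∧
    (∀ x : Fin 5 → ℝ, a12Bracket x x = 0) ∧
    (∀ x y z : Fin 5 → ℝ,
        a12Bracket (a12Bracket x y) z + a12Bracket (a12Bracket y z) x +
          a12Bracket (a12Bracket z x) y = 0) ∧
    (∃ x y z : Fin 5 → ℝ, a12Bracket (a12Bracket x y) z ≠ 0) ∧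
    (∀ x y z w : Fin 5 → ℝ, a12Bracket (a12Bracket (a12Bracket x y) z) w = 0) ∧
    (∀ x y : Fin 5 → ℝ, a12Q x y = a12Q y x) ∧
    (∀ x : Fin 5 → ℝ, (∀ y, a12Q x y = 0) → x = 0) ∧
    (∀ x y z : Fin 5 → ℝ, a12Q (a12Bracket x y) z + a12Q y (a12Bracket x z) = 0) := by
  have hsingle (j : Fin 5) : (fun i ↦ if i = j then (1 : ℝ) else 0) = Pi.single j 1 := by
    ext i
    rw [Pi.single_apply]
  simp only [hsingle]
  refine ⟨a12Bracket_single_zero_one, a12Bracket_single_zero_two, a12Bracket_single_one_two, ?_⟩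
  have hS := selfAdjoint_comp_of_adjoint a12Q_comm a12Q_a12Incl
  have hnonzero := a12Bracket_a12Bracket_single_ne_zero
  simp only [a12Bracket_eq_crossBracket] at hnonzero ⊢
  exact ⟨fun a x y z ↦ by rw [map_add, map_smul, LinearMap.add_apply, LinearMap.smul_apply],
    fun a x y z ↦ by rw [map_add, map_smul],
    crossBracket_self,
    crossBracket_jacobi hS,
    ⟨_, _, _, hnonzero⟩,
    crossBracket_crossBracket_crossBracket_eq_zero a12Proj_a12Incl,
    a12Q_comm,
    fun _ ↦ eq_zero_of_forall_a12Q_eq_zero,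
    crossBracket_adInvariant a12Q_comm a12Q_a12Incl⟩
end
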